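/- Assume the curve setup with counterclockwise orientation and let a well distributed mesh with parameters κ ≥ 2 and M > 0 be given. Then there exist C > 0 and N₀ such that for every N ≥ N₀: max_{1≤k≤N} |(L/N)·Σ_{j=1}^{N} γ'(s̃_j^N)/(γ(s̃_j^N) − γ(s_k^N)) − iπ| ≤ C·N^{−κ}, where γ(s) = l₁(s) + i·l₂(s) ∈ ℂ. -/

import Mathlib

open Real MeasureTheory

/-!
Let `e` be the unit circle, run through at constant speed with the period `L` of `γ`. The quotient
of chords `Q s t = (γ t - γ s) / (e t - e s)` extends to a smooth function without zeros, and the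
Cauchy kernel of `γ` is the logarithmic derivative of `Q s` plus the Cauchy kernel of `e`.

On equally spaced points the kernel of `e` is summed over the points `z * ζ ^ j`, where `ζ` is a
primitive `N`-th root of unity. When the points are the midpoints with respect to `s`, `z ^ N = -1`
and the sum is exact; moving the points by `η` costs `O(N * η)`, by Parseval's identity
for the squares of the kernel.

The logarithmic derivative of `Q s` is smooth and periodic in both parameters, so its Riemann sums
converge to its integral faster than any power of `1 / N`. That integral is `2 * π * I` times an
integer independent of `s`. The integer is at most `0`, by following the argument of
`-1 / (γ - γ s)` from a point `γ s` of greatest real part, and at least `0`, by following that of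
`(γ - z₀) / (γ - γ s)` from a point `γ s` closest to the point `z₀` around which `γ` winds once.
-/

open Set Filter Topology Function
open scoped ContDiff

section ParametricIntegrals

universe u v

variable {X : Type u} [NormedAddCommGroup X] [NormedSpace ℝ X] [ProperSpace X]

theorem hasFDerivAt_intervalIntegral_param {E : Type*} [NormedAddCommGroup E] [NormedSpace ℝ E]
    {F : X → ℝ → E} (hF : ContDiff ℝ 1 (uncurry F)) (a b : ℝ) (x : X) :
    HasFDerivAt (fun x => ∫ u in a..b, F x u)
      (∫ u in a..b, (fderiv ℝ (uncurry F) (x, u)).comp (.inl ℝ X ℝ)) x := by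
  have hF' : Continuous fun p => (fderiv ℝ (uncurry F) p).comp (.inl ℝ X ℝ) :=
    (hF.continuous_fderiv one_ne_zero).clm_comp continuous_const
  obtain ⟨B, hB⟩ := ((isCompact_closedBall x 1).prod isCompact_uIcc).exists_bound_of_continuousOn
    (hF'.continuousOn (s := Metric.closedBall x 1 ×ˢ uIcc a b))
  have hF_right (y : X) : Continuous (F y) := hF.continuous.comp (Continuous.prodMk_right y)
  refine intervalIntegral.hasFDerivAt_integral_of_dominated_of_fderiv_le (bound := fun _ => B)
    (F' := fun y u => (fderiv ℝ (uncurry F) (y, u)).comp (.inl ℝ X ℝ))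
    (Metric.closedBall_mem_nhds x one_pos)
    (.of_forall fun y => (hF_right y).aestronglyMeasurable)
    ((hF_right x).intervalIntegrable a b)
    (hF'.comp (Continuous.prodMk_right x)).aestronglyMeasurable
    (.of_forall fun u hu y hy => hB (y, u) ⟨hy, uIoc_subset_uIcc hu⟩)
    intervalIntegrable_const
    (.of_forall fun u _ y _ => ?_)
  have hF_total := (hF.differentiable one_ne_zero (y, u)).hasFDerivAt
  exact hF_total.comp y (hasFDerivAt_prodMk_left (𝕜 := ℝ) y u)

theorem contDiff_nat_intervalIntegral_param {E : Type max u v} [NormedAddCommGroup E]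
    [NormedSpace ℝ E] {n : ℕ} {F : X → ℝ → E} (hF : ContDiff ℝ n (uncurry F)) (a b : ℝ) :
    ContDiff ℝ n fun x => ∫ u in a..b, F x u := by
  induction n generalizing E with
  | zero =>
    rw [Nat.cast_zero, contDiff_zero] at *
    exact intervalIntegral.continuous_parametric_intervalIntegral_of_continuous' hF a b
  | succ n ih =>
    rw [Nat.cast_succ, contDiff_succ_iff_hasFDerivAt]
    refine ⟨_, ih ?_, hasFDerivAt_intervalIntegral_param
      (hF.of_le (by exact_mod_cast Nat.le_add_left 1 n)) a b⟩
    exact (hF.fderiv_right (m := n) (by norm_cast)).clm_comp contDiff_const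

theorem contDiff_intervalIntegral_param {E : Type max u v} [NormedAddCommGroup E]
    [NormedSpace ℝ E] {n : ℕ∞} {F : X → ℝ → E} (hF : ContDiff ℝ n (uncurry F)) (a b : ℝ) :
    ContDiff ℝ n fun x => ∫ u in a..b, F x u :=
  contDiff_iff_forall_nat_le.2 fun _ hm =>
    contDiff_nat_intervalIntegral_param (hF.of_le (by exact_mod_cast hm)) a b

end ParametricIntegrals

section DividedDifferences

variable {E : Type*} [NormedAddCommGroup E] [NormedSpace ℝ E] [CompleteSpace E] {f : ℝ → E}

theorem dslope_eq_intervalIntegral_deriv (hf : ContDiff ℝ 1 f) (s t : ℝ) :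
    dslope f s t = ∫ u in (0 : ℝ)..1, deriv f (s + u * (t - s)) := by
  rcases eq_or_ne t s with rfl | hts
  · simp
  have hchord : (t - s) • ∫ u in (0 : ℝ)..1, deriv f (s + u * (t - s)) = f t - f s := by
    have := intervalIntegral.smul_integral_comp_add_mul (a := 0) (b := 1) (deriv f) (t - s) s
    simp only [mul_comm (t - s), zero_mul, add_zero, one_mul, add_sub_cancel] at this
    rw [this]
    exact intervalIntegral.integral_deriv_eq_sub
      (fun x _ => hf.differentiable one_ne_zero x)
      ((hf.continuous_deriv le_rfl).intervalIntegrable _ _)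
  rw [dslope_of_ne f hts, slope_def_module, ← hchord, inv_smul_smul₀ (sub_ne_zero.2 hts)]

theorem contDiff_dslope {n : ℕ∞} (hf : ContDiff ℝ (n + 1) f) :
    ContDiff ℝ n fun p : ℝ × ℝ => dslope f p.1 p.2 := by
  simp only [dslope_eq_intervalIntegral_deriv (hf.of_le le_add_self)]
  refine contDiff_intervalIntegral_param (X := ℝ × ℝ)
    (F := fun p u => deriv f (p.1 + u * (p.2 - p.1))) ?_ 0 1
  exact (contDiff_succ_iff_deriv.1 hf).2.2.comp (by fun_prop)

end DividedDifferences

section LogarithmicDerivatives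

variable {f : ℝ → ℂ}

theorem continuous_logDeriv (hf : ContDiff ℝ 1 f) (hf₀ : ∀ t, f t ≠ 0) :
    Continuous (logDeriv f) :=
  (hf.continuous_deriv le_rfl).div hf.continuous hf₀

theorem exp_integral_logDeriv (hf : ContDiff ℝ 1 f) (hf₀ : ∀ t, f t ≠ 0) (a b : ℝ) :
    Complex.exp (∫ t in a..b, logDeriv f t) = f b / f a := by
  have hderiv (x : ℝ) :
      HasDerivAt (fun x => Complex.exp (-∫ t in a..x, logDeriv f t) * f x) 0 x := by
    have hint := ((continuous_logDeriv hf hf₀).integral_hasStrictDerivAt a x).hasDerivAt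
    refine (hint.neg.cexp.mul (hf.differentiable one_ne_zero x).hasDerivAt).congr_deriv ?_
    rw [logDeriv_apply]
    field [hf₀ x]
  have hconst := is_const_of_deriv_eq_zero (fun x => (hderiv x).differentiableAt)
    (fun x => (hderiv x).deriv) b a
  rw [intervalIntegral.integral_same, neg_zero, Complex.exp_zero, one_mul, Complex.exp_neg,
    inv_mul_eq_iff_eq_mul₀ (Complex.exp_ne_zero _)] at hconst
  rw [hconst, mul_div_cancel_right₀ _ (hf₀ a)]

theorem exists_int_integral_logDeriv_eq (hf : ContDiff ℝ 1 f) (hf₀ : ∀ t, f t ≠ 0) {a b : ℝ}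
    (hab : f a = f b) : ∃ n : ℤ, ∫ t in a..b, logDeriv f t = n * (2 * π * Complex.I) := by
  rw [← Complex.exp_eq_one_iff, exp_integral_logDeriv hf hf₀, hab, div_self (hf₀ b)]

theorem hasDerivAt_arg {t : ℝ} (hf : DifferentiableAt ℝ f t)
    (ht : f t ∈ Complex.slitPlane) :
    HasDerivAt (fun u => (f u).arg) (logDeriv f t).im t := by
  have := Complex.imCLM.hasFDerivAt.comp_hasDerivAt t (hf.hasDerivAt.clog_real ht)
  simpa [Function.comp_def, Complex.log_im, logDeriv_apply] using this

end LogarithmicDerivatives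

section ImproperPrimitives

theorem norm_integral_le_of_hasDerivAt_Ioo {E : Type*} [NormedAddCommGroup E] [NormedSpace ℝ E]
    [CompleteSpace E] {K Φ : ℝ → E} {a b C : ℝ} (hab : a < b) (hK : Continuous K)
    (hΦ : ∀ t ∈ Ioo a b, HasDerivAt Φ (K t) t) (hC : ∀ t ∈ Ioo a b, ‖Φ t‖ ≤ C) :
    ‖∫ t in a..b, K t‖ ≤ 2 * C := by
  have hlim : Tendsto (fun δ => ‖∫ t in (a + δ)..(b - δ), K t‖) (𝓝[>] 0)
      (𝓝 ‖∫ t in a..b, K t‖) := by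
    have hcont : Continuous fun δ => ‖∫ t in (a + δ)..(b - δ), K t‖ := by
      have hprim := intervalIntegral.continuous_primitive
        (fun u v => hK.intervalIntegrable (μ := volume) u v) 0
      have hsplit (δ : ℝ) : ∫ t in (a + δ)..(b - δ), K t =
          (∫ t in 0..(b - δ), K t) - ∫ t in 0..(a + δ), K t :=
        (intervalIntegral.integral_interval_sub_left (hK.intervalIntegrable _ _)
          (hK.intervalIntegrable _ _)).symm
      simp only [hsplit]
      exact ((hprim.comp (by fun_prop)).sub (hprim.comp (by fun_prop))).norm
    simpa using (hcont.tendsto 0).mono_left nhdsWithin_le_nhds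
  refine le_of_tendsto hlim ?_
  filter_upwards [Ioo_mem_nhdsGT (show 0 < (b - a) / 2 by linarith)] with δ ⟨hδ₀, hδ⟩
  have hsub : uIcc (a + δ) (b - δ) ⊆ Ioo a b := by
    rw [uIcc_of_le (by linarith)]
    exact Icc_subset_Ioo (by linarith) (by linarith)
  rw [intervalIntegral.integral_eq_sub_of_hasDerivAt (fun t ht => hΦ t (hsub ht))
    (hK.intervalIntegrable _ _), two_mul]
  exact norm_sub_le_of_le (hC _ (hsub right_mem_uIcc)) (hC _ (hsub left_mem_uIcc))

end ImproperPrimitives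

section PeriodicFunctions

variable {E : Type*} [NormedAddCommGroup E]

theorem exists_forall_norm_le_of_biperiodic {f : ℝ → ℝ → E} {L : ℝ} (hL : 0 < L)
    (hf : Continuous (uncurry f)) (hs : Periodic f L) (ht : ∀ s, Periodic (f s) L) :
    ∃ B, ∀ s t, ‖f s t‖ ≤ B := by
  obtain ⟨B, hB⟩ := ((isCompact_Icc (a := 0) (b := L)).prod
    (isCompact_Icc (a := 0) (b := L))).exists_bound_of_continuousOn hf.continuousOn
  refine ⟨B, fun s t => ?_⟩
  obtain ⟨s', hs', hss'⟩ := hs.exists_mem_Ico₀ hL s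
  obtain ⟨t', ht', htt'⟩ := (ht s').exists_mem_Ico₀ hL t
  rw [hss', htt']
  exact hB (s', t') ⟨Ico_subset_Icc_self hs', Ico_subset_Icc_self ht'⟩

theorem exists_forall_le_of_continuous_periodic {f : ℝ → ℝ} {L : ℝ} (hL : 0 < L)
    (hf : Continuous f) (hper : Periodic f L) : ∃ s, ∀ t, f s ≤ f t := by
  obtain ⟨s, -, hs⟩ := isCompact_Icc.exists_isMinOn (nonempty_Icc.2 hL.le) hf.continuousOn
  refine ⟨s, fun t => ?_⟩
  obtain ⟨t', ht', htt'⟩ := hper.exists_mem_Ico₀ hL t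
  exact htt' ▸ hs (Ico_subset_Icc_self ht')

variable [NormedSpace ℝ E] {f : ℝ → E} {L : ℝ}

theorem periodic_iteratedDeriv (hper : Periodic f L) (k : ℕ) :
    Periodic (iteratedDeriv k f) L := fun x => by
  rw [← congrFun (iteratedDeriv_comp_add_const k f L) x, hper.funext]

theorem periodic_deriv (hper : Periodic f L) : Periodic (deriv f) L := by
  simpa only [iteratedDeriv_one] using periodic_iteratedDeriv hper 1

theorem norm_smul_sub_integral_le_of_norm_deriv_le [CompleteSpace E] {B : ℝ} (hL : 0 < L)
    (hf : Differentiable ℝ f) (hper : Periodic f L) (hB : ∀ x, ‖deriv f x‖ ≤ B) (x : ℝ) :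
    ‖L • f x - ∫ y in 0..L, f y‖ ≤ L * (L * B) := by
  have hsub : L • f x - ∫ y in 0..L, f y = ∫ y in x..x + L, (f x - f y) := by
    rw [intervalIntegral.integral_sub intervalIntegrable_const
      (hf.continuous.intervalIntegrable _ _), hper.intervalIntegral_add_eq x 0,
      intervalIntegral.integral_const]
    simp
  have hosc : ∀ y ∈ uIoc x (x + L), ‖f x - f y‖ ≤ L * B := by
    intro y hy
    rw [uIoc_of_le (by linarith)] at hy
    have hlip := convex_univ.norm_image_sub_le_of_norm_deriv_le (fun z _ => hf z)
      (fun z _ => hB z) (mem_univ y) (mem_univ x)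
    have hxy : ‖x - y‖ ≤ L := by
      rw [Real.norm_eq_abs, abs_le]
      constructor <;> linarith [hy.1, hy.2]
    have hB₀ : 0 ≤ B := (norm_nonneg _).trans (hB 0)
    nlinarith
  rw [hsub]
  refine (intervalIntegral.norm_integral_le_of_norm_le_const hosc).trans_eq ?_
  rw [add_sub_cancel_left, abs_of_pos hL, mul_comm]

theorem norm_deriv_le_of_norm_iteratedDeriv_le [CompleteSpace E] {m : ℕ} {B : ℝ} (hL : 0 < L)
    (hf : ContDiff ℝ (m + 1) f) (hper : Periodic f L)
    (hB : ∀ x, ‖iteratedDeriv (m + 1) f x‖ ≤ B) (x : ℝ) : ‖deriv f x‖ ≤ L ^ m * B := by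
  induction m generalizing f x with
  | zero => simpa only [iteratedDeriv_one, pow_zero, one_mul, zero_add] using hB x
  | succ m ih =>
    have hf' : ContDiff ℝ (m + 1) (deriv f) := (contDiff_succ_iff_deriv.1 hf).2.2
    have hB' : ∀ x, ‖deriv (deriv f) x‖ ≤ L ^ m * B :=
      ih hf' (periodic_deriv hper) fun x => by simpa only [iteratedDeriv_succ'] using hB x
    have hmean : ∫ y in 0..L, deriv f y = 0 := by
      rw [intervalIntegral.integral_deriv_eq_sub
        (fun y _ => hf.differentiable (by simp) y) (hf'.continuous.intervalIntegrable _ _),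
        hper.eq, sub_self]
    have hpoincare := norm_smul_sub_integral_le_of_norm_deriv_le hL
      (hf'.differentiable (by simp)) (periodic_deriv hper) hB' x
    rw [hmean, sub_zero, norm_smul, Real.norm_of_nonneg hL.le] at hpoincare
    exact (le_of_mul_le_mul_left hpoincare hL).trans_eq (by ring)

end PeriodicFunctions

section PartialDerivatives

variable {X E : Type*} [NormedAddCommGroup X] [NormedSpace ℝ X] [NormedAddCommGroup E]
  [NormedSpace ℝ E] {f : X → ℝ → E}

theorem contDiff_uncurry_deriv (hf : ContDiff ℝ ∞ (uncurry f)) :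
    ContDiff ℝ ∞ (uncurry fun x => deriv (f x)) :=
  have hf' : ContDiff ℝ ∞ (uncurry fun p : X × ℝ => f p.1) :=
    hf.comp ((contDiff_fst.comp contDiff_fst).prodMk contDiff_snd)
  hf'.fderiv_apply contDiff_snd contDiff_const (k := fun _ => (1 : ℝ)) (by simp)

theorem contDiff_uncurry_iteratedDeriv (hf : ContDiff ℝ ∞ (uncurry f)) (k : ℕ) :
    ContDiff ℝ ∞ (uncurry fun x => iteratedDeriv k (f x)) := by
  induction k with
  | zero => simpa only [iteratedDeriv_zero] using hf
  | succ k ih => simpa only [iteratedDeriv_succ] using contDiff_uncurry_deriv ih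

end PartialDerivatives

section TrapezoidalRule

theorem periodic_sum_range_comp_add_mul {E : Type*} [AddCommMonoid E] [IsCancelAdd E] {f : ℝ → E}
    {N : ℕ} {h : ℝ} (hper : Periodic f (N * h)) :
    Periodic (fun a => ∑ j ∈ Finset.range N, f (a + j * h)) h := by
  intro a
  beta_reduce
  have hwrap := (Finset.sum_range_succ' (fun j : ℕ => f (a + j * h)) N).symm.trans
    (Finset.sum_range_succ _ N)
  rw [hper, Nat.cast_zero, zero_mul, add_zero, add_left_inj] at hwrap
  rw [← hwrap]
  refine Finset.sum_congr rfl fun j _ => congrArg f ?_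
  push_cast
  ring

variable {E : Type*} [NormedAddCommGroup E] [NormedSpace ℝ E] {f : ℝ → E} {L : ℝ} {N : ℕ}

theorem integral_sum_range_comp_add_mul (hf : Continuous f) (h : ℝ) :
    ∫ a in 0..h, ∑ j ∈ Finset.range N, f (a + j * h) = ∫ t in 0..(N * h), f t := by
  have hsplit := intervalIntegral.sum_integral_adjacent_intervals (f := f) (μ := volume)
    (a := fun k : ℕ => k * h) (n := N) fun _ _ => hf.intervalIntegrable _ _
  rw [Nat.cast_zero, zero_mul] at hsplit
  rw [← hsplit, intervalIntegral.integral_finsetSum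
    fun j _ => Continuous.intervalIntegrable (by fun_prop) _ _]
  refine Finset.sum_congr rfl fun j _ => ?_
  rw [intervalIntegral.integral_comp_add_right, zero_add, Nat.cast_succ, add_one_mul, add_comm h]

theorem norm_riemannSum_sub_integral_le [CompleteSpace E] {m : ℕ} {B : ℝ} (hL : 0 < L)
    (hN : 0 < N) (hf : ContDiff ℝ (m + 1) f) (hper : Periodic f L)
    (hB : ∀ x, ‖iteratedDeriv (m + 1) f x‖ ≤ B) (a : ℝ) :
    ‖(L / N) • ∑ j ∈ Finset.range N, f (a + j * (L / N)) - ∫ t in 0..L, f t‖ ≤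
      L * (L / N) ^ (m + 1) * B := by
  have hN' : (0 : ℝ) < N := Nat.cast_pos.2 hN
  have hNh : N * (L / N) = L := mul_div_cancel₀ L hN'.ne'
  set h := L / N
  have hh : 0 < h := div_pos hL hN'
  set S : ℝ → E := fun a => ∑ j ∈ Finset.range N, f (a + j * h)
  have hS : ContDiff ℝ (m + 1) S := ContDiff.sum fun j _ => hf.comp (by fun_prop)
  have hSper : Periodic S h := periodic_sum_range_comp_add_mul (hNh.symm ▸ hper)
  have hSB (x : ℝ) : ‖iteratedDeriv (m + 1) S x‖ ≤ N * B := by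
    have hterm (j : ℕ) : ContDiff ℝ (m + 1 : ℕ) fun a => f (a + j * h) :=
      ContDiff.comp (mod_cast hf) (by fun_prop)
    rw [iteratedDeriv_fun_sum fun j _ => (hterm j).contDiffAt]
    simp only [iteratedDeriv_comp_add_const]
    exact (norm_sum_le_of_le _ fun j _ => hB _).trans_eq (by simp)
  have hSint : ∫ a in 0..h, S a = ∫ t in 0..L, f t := by
    rw [integral_sum_range_comp_add_mul hf.continuous, hNh]
  calc ‖h • S a - ∫ t in 0..L, f t‖ ≤ h * (h * (h ^ m * (N * B))) := hSint ▸
        norm_smul_sub_integral_le_of_norm_deriv_le hh (hS.differentiable (by simp)) hSper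
          (norm_deriv_le_of_norm_iteratedDeriv_le hh hS hSper hSB) a
    _ = L * h ^ (m + 1) * B := by rw [← hNh]; ring

theorem norm_riemannSum_sub_riemannSum_le {B η : ℝ} (hL : 0 ≤ L) (hN : 0 < N)
    (hf : Differentiable ℝ f) (hB : ∀ x, ‖deriv f x‖ ≤ B) {x y : Fin N → ℝ}
    (hxy : ∀ j, |x j - y j| ≤ η) :
    ‖(L / N) • ∑ j, f (x j) - (L / N) • ∑ j, f (y j)‖ ≤ L * B * η := by
  have hlip (j : Fin N) : ‖f (x j) - f (y j)‖ ≤ B * η :=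
    (convex_univ.norm_image_sub_le_of_norm_deriv_le (fun t _ => hf t) (fun t _ => hB t)
      (mem_univ _) (mem_univ _)).trans
      (mul_le_mul_of_nonneg_left (hxy j) ((norm_nonneg _).trans (hB 0)))
  rw [← smul_sub, ← Finset.sum_sub_distrib, norm_smul, Real.norm_of_nonneg (by positivity)]
  calc L / N * ‖∑ j, (f (x j) - f (y j))‖
      ≤ L / N * ∑ _j : Fin N, B * η := by gcongr; exact norm_sum_le_of_le _ fun j _ => hlip j
    _ = L * B * η := by
        rw [Finset.sum_const, Finset.card_univ, Fintype.card_fin, nsmul_eq_mul]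
        field

theorem exists_norm_perturbedRiemannSum_sub_integral_le [CompleteSpace E] {f : ℝ → ℝ → E}
    (hL : 0 < L) (hf : ContDiff ℝ ∞ (uncurry f)) (hs : Periodic f L)
    (ht : ∀ s, Periodic (f s) L) (m : ℕ) :
    ∃ C, ∀ N : ℕ, 0 < N → ∀ (s a η : ℝ) (t : Fin N → ℝ), (∀ j, |t j - (a + j * (L / N))| ≤ η) →
      ‖(L / N) • ∑ j, f s (t j) - ∫ u in 0..L, f s u‖ ≤ C * (1 / N ^ m + η) := by
  have hf_right (s : ℝ) : ContDiff ℝ ∞ (f s) := hf.comp (contDiff_prodMk_right s)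
  have hbound (k : ℕ) : ∃ B, ∀ s t, ‖iteratedDeriv k (f s) t‖ ≤ B :=
    exists_forall_norm_le_of_biperiodic hL (contDiff_uncurry_iteratedDeriv hf k).continuous
      (hs.comp (iteratedDeriv k)) fun s => periodic_iteratedDeriv (ht s) k
  obtain ⟨B₁, hB₁⟩ := hbound 1
  obtain ⟨B, hB⟩ := hbound (m + 1)
  have hB₁₀ : 0 ≤ B₁ := (norm_nonneg _).trans (hB₁ 0 0)
  have hB₀ : 0 ≤ B := (norm_nonneg _).trans (hB 0 0)
  refine ⟨L * B₁ + L * L ^ (m + 1) * B, fun N hN s a η t hη => ?_⟩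
  have hη₀ : 0 ≤ η := (abs_nonneg _).trans (hη ⟨0, hN⟩)
  have hmesh : (L / N) ^ (m + 1) ≤ L ^ (m + 1) * (1 / N ^ m) := by
    rw [div_pow, div_eq_mul_one_div]
    gcongr
    exacts [Nat.one_le_cast.2 hN, m.le_succ]
  have hperturb := norm_riemannSum_sub_riemannSum_le hL.le hN
    ((hf_right s).differentiable (by simp)) (fun x => iteratedDeriv_one (f := f s) ▸ hB₁ s x) hη
  have htrapezoid := norm_riemannSum_sub_integral_le hL hN
    ((hf_right s).of_le (by exact_mod_cast le_top)) (ht s) (hB s) a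
  rw [← Fin.sum_univ_eq_sum_range fun j => f s (a + j * (L / N))] at htrapezoid
  calc ‖(L / N) • ∑ j, f s (t j) - ∫ u in 0..L, f s u‖
      ≤ L * B₁ * η + L * (L / N) ^ (m + 1) * B :=
        norm_sub_le_norm_sub_add_norm_sub _ _ _ |>.trans (add_le_add hperturb htrapezoid)
    _ ≤ L * B₁ * (1 / N ^ m + η) + L * (L ^ (m + 1) * (1 / N ^ m + η)) * B := by
        gcongr
        · exact le_add_of_nonneg_left (by positivity)
        · exact hmesh.trans (by gcongr; exact le_add_of_nonneg_right hη₀)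
    _ = (L * B₁ + L * L ^ (m + 1) * B) * (1 / N ^ m + η) := by ring

end TrapezoidalRule

section RootsOfUnity

theorem mul_pow_pow_eq_of_pow_eq_one {M : Type*} [CommMonoid M] {ζ : M} {N : ℕ} (hζ : ζ ^ N = 1)
    (z : M) (j : ℕ) : (z * ζ ^ j) ^ N = z ^ N := by
  rw [mul_pow, pow_right_comm, hζ, one_pow, mul_one]

section Field

variable {K : Type*} [Field K] {ζ z : K} {N : ℕ}

theorem inv_one_sub_eq_mul_geom_sum (hz : z ^ N ≠ 1) :
    (1 - z)⁻¹ = (1 - z ^ N)⁻¹ * ∑ m ∈ Finset.range N, z ^ m := by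
  have hzN : 1 - z ^ N ≠ 0 := sub_ne_zero.2 hz.symm
  rw [inv_eq_iff_eq_inv, mul_inv_rev, inv_inv, ← mul_neg_geom_sum, mul_comm, mul_inv_cancel_right₀]
  exact right_ne_zero_of_mul (mul_neg_geom_sum z N ▸ hzN)

theorem sum_pow_div_pow_pow_eq_ite (hζ : IsPrimitiveRoot ζ N) {m n : ℕ}
    (hm : m < N) (hn : n < N) :
    ∑ j ∈ Finset.range N, (ζ ^ m / ζ ^ n) ^ j = if m = n then (N : K) else 0 := by
  have hζn : ζ ^ n ≠ 0 := pow_ne_zero n (hζ.ne_zero (by lia))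
  split_ifs with hmn
  · simp [hmn, div_self hζn]
  · have hξ : ζ ^ m / ζ ^ n ≠ 1 := fun h => hmn (hζ.pow_inj hm hn ((div_eq_one_iff_eq hζn).1 h))
    have hξN : (ζ ^ m / ζ ^ n) ^ N = 1 := by
      rw [div_pow, pow_right_comm ζ m, pow_right_comm ζ n, hζ.pow_eq_one, one_pow, one_pow, div_one]
    rw [geom_sum_eq hξ, hξN, sub_self, zero_div]

theorem sum_inv_one_sub_mul_pow (hζ : IsPrimitiveRoot ζ N) (hz : z ^ N ≠ 1) :
    ∑ j ∈ Finset.range N, (1 - z * ζ ^ j)⁻¹ = N / (1 - z ^ N) := by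
  have hN : 0 < N := Nat.pos_of_ne_zero (by rintro rfl; exact hz (pow_zero z))
  calc ∑ j ∈ Finset.range N, (1 - z * ζ ^ j)⁻¹
      = (1 - z ^ N)⁻¹ * ∑ j ∈ Finset.range N, ∑ m ∈ Finset.range N, (z * ζ ^ j) ^ m := by
        rw [Finset.mul_sum]
        refine Finset.sum_congr rfl fun j _ => ?_
        rw [inv_one_sub_eq_mul_geom_sum (N := N), mul_pow_pow_eq_of_pow_eq_one hζ.pow_eq_one]
        rwa [mul_pow_pow_eq_of_pow_eq_one hζ.pow_eq_one]
    _ = (1 - z ^ N)⁻¹ * ∑ m ∈ Finset.range N, z ^ m * if m = 0 then (N : K) else 0 := by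
        rw [Finset.sum_comm]
        refine congrArg _ (Finset.sum_congr rfl fun m hm => ?_)
        rw [← sum_pow_div_pow_pow_eq_ite hζ (Finset.mem_range.1 hm) hN, Finset.mul_sum]
        simp only [mul_pow, pow_zero, div_one, pow_right_comm]
    _ = N / (1 - z ^ N) := by simp [hN, div_eq_inv_mul]

end Field

variable {ζ z : ℂ} {N : ℕ}

theorem sum_norm_sq_sum_mul_pow (hζ : IsPrimitiveRoot ζ N) (c : ℕ → ℂ) :
    ∑ j ∈ Finset.range N, ‖∑ m ∈ Finset.range N, c m * (ζ ^ j) ^ m‖ ^ 2 =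
      N * ∑ m ∈ Finset.range N, ‖c m‖ ^ 2 := by
  rcases N.eq_zero_or_pos with rfl | hN
  · simp
  have hconj : starRingEnd ℂ ζ = ζ⁻¹ := (Complex.inv_eq_conj (hζ.norm'_eq_one hN.ne')).symm
  have horth {m n} (hm : m ∈ Finset.range N) (hn : n ∈ Finset.range N) :
      ∑ j ∈ Finset.range N, (c m * (ζ ^ j) ^ m) * starRingEnd ℂ (c n * (ζ ^ j) ^ n) =
        c m * starRingEnd ℂ (c n) * if m = n then (N : ℂ) else 0 := by
    rw [← sum_pow_div_pow_pow_eq_ite hζ (Finset.mem_range.1 hm) (Finset.mem_range.1 hn),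
      Finset.mul_sum]
    refine Finset.sum_congr rfl fun j _ => ?_
    rw [map_mul, map_pow, map_pow, hconj, mul_mul_mul_comm, pow_right_comm, pow_right_comm ζ⁻¹,
      ← mul_pow, inv_pow, div_eq_mul_inv]
  rw [← Complex.ofReal_inj]
  push_cast
  simp only [← Complex.mul_conj', map_sum, Finset.sum_mul_sum]
  rw [Finset.sum_comm, Finset.mul_sum]
  refine Finset.sum_congr rfl fun m hm => ?_
  rw [Finset.sum_comm, Finset.sum_congr rfl fun n hn => horth hm hn]
  simp [Finset.mem_range.1 hm, mul_comm]

theorem sum_norm_sq_inv_one_sub_mul_pow (hζ : IsPrimitiveRoot ζ N) (hz₁ : ‖z‖ = 1)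
    (hz : z ^ N ≠ 1) :
    ∑ j ∈ Finset.range N, ‖(1 - z * ζ ^ j)⁻¹‖ ^ 2 = (N / ‖1 - z ^ N‖) ^ 2 := by
  calc ∑ j ∈ Finset.range N, ‖(1 - z * ζ ^ j)⁻¹‖ ^ 2
      = ‖(1 - z ^ N)⁻¹‖ ^ 2 *
          ∑ j ∈ Finset.range N, ‖∑ m ∈ Finset.range N, z ^ m * (ζ ^ j) ^ m‖ ^ 2 := by
        rw [Finset.mul_sum]
        refine Finset.sum_congr rfl fun j _ => ?_
        have hzζ := mul_pow_pow_eq_of_pow_eq_one hζ.pow_eq_one z j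
        rw [inv_one_sub_eq_mul_geom_sum (hzζ.trans_ne hz), hzζ, norm_mul, mul_pow]
        simp only [mul_pow]
    _ = (N / ‖1 - z ^ N‖) ^ 2 := by
        simp only [sum_norm_sq_sum_mul_pow hζ, norm_pow, hz₁, one_pow, Finset.sum_const,
          Finset.card_range, nsmul_one, norm_inv]
        ring

theorem norm_inv_one_sub_mul_pow_le (hζ : IsPrimitiveRoot ζ N) (hz₁ : ‖z‖ = 1)
    (hz : z ^ N ≠ 1) {j : ℕ} (hj : j < N) : ‖(1 - z * ζ ^ j)⁻¹‖ ≤ N / ‖1 - z ^ N‖ := by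
  rw [← pow_le_pow_iff_left₀ (norm_nonneg _) (by positivity) two_ne_zero,
    ← sum_norm_sq_inv_one_sub_mul_pow hζ hz₁ hz]
  exact Finset.single_le_sum (f := fun j => ‖(1 - z * ζ ^ j)⁻¹‖ ^ 2) (fun _ _ => sq_nonneg _)
    (Finset.mem_range.2 hj)

theorem re_inv_one_sub (hz : ‖z‖ = 1) (hz₁ : z ≠ 1) : ((1 - z)⁻¹).re = 1 / 2 := by
  have hz₀ : z ≠ 0 := norm_ne_zero_iff.1 (hz.trans_ne one_ne_zero)
  have hsum : (1 - z)⁻¹ + starRingEnd ℂ (1 - z)⁻¹ = 1 := by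
    rw [map_inv₀, map_sub, map_one, ← Complex.inv_eq_conj hz]
    have h₁ : 1 - z ≠ 0 := sub_ne_zero.2 hz₁.symm
    have h₂ : z - 1 ≠ 0 := sub_ne_zero.2 hz₁
    have h₃ : (1 - z⁻¹)⁻¹ = z / (z - 1) := by rw [← inv_div, sub_div, div_self hz₀, one_div]
    rw [h₃]
    field_simp
    ring
  rw [Complex.add_conj] at hsum
  have : 2 * ((1 - z)⁻¹).re = 1 := by exact_mod_cast hsum
  linarith

theorem norm_inv_sub_inv_le {K : Type*} [NormedField K] {a b : K} (ha : a ≠ 0)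
    (hab : ‖b - a‖ ≤ ‖a‖ / 2) : b ≠ 0 ∧ ‖b⁻¹ - a⁻¹‖ ≤ 2 * ‖b - a‖ * ‖a⁻¹‖ ^ 2 := by
  have ha' : 0 < ‖a‖ := norm_pos_iff.2 ha
  have hb : ‖a‖ / 2 ≤ ‖b‖ := by linarith [norm_sub_norm_le a b, norm_sub_rev a b]
  have hb₀ : b ≠ 0 := norm_pos_iff.1 (by linarith)
  refine ⟨hb₀, ?_⟩
  rw [inv_sub_inv hb₀ ha, norm_div, norm_mul, norm_sub_rev, norm_inv]
  calc ‖b - a‖ / (‖b‖ * ‖a‖) ≤ ‖b - a‖ / (‖a‖ / 2 * ‖a‖) := by gcongr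
    _ = 2 * ‖b - a‖ * ‖a‖⁻¹ ^ 2 := by field

theorem norm_sum_inv_one_sub_sub_le (hζ : IsPrimitiveRoot ζ N) (hz : z ^ N = -1) {u : Fin N → ℂ}
    {δ : ℝ} (hu : ∀ j, ‖u j - z * ζ ^ (j : ℕ)‖ ≤ δ) (hδ : δ ≤ 1 / N) :
    (∀ j, u j ≠ 1) ∧ ‖∑ j, (1 - u j)⁻¹ - N / 2‖ ≤ δ * N ^ 2 / 2 := by
  have hN : N ≠ 0 := by
    rintro rfl
    norm_num at hz
  have hz₁ : ‖z‖ = 1 := by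
    rw [← pow_eq_one_iff_of_nonneg (norm_nonneg z) hN, ← norm_pow, hz, norm_neg, norm_one]
  have hzN : z ^ N ≠ 1 := by norm_num [hz]
  have hdist : ‖1 - z ^ N‖ = 2 := by norm_num [hz]
  set w : ℕ → ℂ := fun j => 1 - z * ζ ^ j
  have hw₀ (j : ℕ) : w j ≠ 0 := fun h =>
    hzN (by rw [← mul_pow_pow_eq_of_pow_eq_one hζ.pow_eq_one z j, ← sub_eq_zero.1 h, one_pow])
  have hgap (j : Fin N) : 1 / N ≤ ‖w j‖ / 2 := by
    have hle := norm_inv_one_sub_mul_pow_le hζ hz₁ hzN j.isLt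
    rw [hdist, norm_inv, inv_le_comm₀ (norm_pos_iff.2 (hw₀ j)) (by positivity)] at hle
    exact (by field : 1 / (N : ℝ) = (N / 2 : ℝ)⁻¹ / 2).trans_le (by gcongr)
  have hu' (j : Fin N) : ‖(1 - u j) - w j‖ ≤ δ := by
    simpa [w, norm_sub_rev] using hu j
  have hinv (j : Fin N) := norm_inv_sub_inv_le (hw₀ j) ((hu' j).trans (hδ.trans (hgap j)))
  refine ⟨fun j hj => (hinv j).1 (sub_eq_zero.2 hj.symm), ?_⟩
  have hsum : ∑ j : Fin N, (w j)⁻¹ = N / 2 := by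
    rw [Fin.sum_univ_eq_sum_range fun j => (w j)⁻¹, sum_inv_one_sub_mul_pow hζ hzN, hz]
    norm_num
  calc ‖∑ j, (1 - u j)⁻¹ - N / 2‖ ≤ ∑ j : Fin N, 2 * δ * ‖(w j)⁻¹‖ ^ 2 := by
        rw [← hsum, ← Finset.sum_sub_distrib]
        exact norm_sum_le_of_le _ fun j _ => (hinv j).2.trans (by gcongr; exact hu' j)
    _ = 2 * δ * (N / 2) ^ 2 := by
        rw [← Finset.mul_sum, Fin.sum_univ_eq_sum_range fun j => ‖(w j)⁻¹‖ ^ 2,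
          sum_norm_sq_inv_one_sub_mul_pow hζ hz₁ hzN, hdist]
    _ = δ * N ^ 2 / 2 := by ring

end RootsOfUnity

section SimpleLoops

/-- `γ` is a smooth regular parametrization, of period `L`, of a simple closed plane curve. -/
structure IsSimpleLoop (L : ℝ) (γ : ℝ → ℂ) : Prop where
  period_pos : 0 < L
  contDiff : ContDiff ℝ ∞ γ
  periodic : Periodic γ L
  deriv_ne_zero : ∀ t, deriv γ t ≠ 0
  injOn : InjOn γ (Ico 0 L)

namespace IsSimpleLoop

variable {L : ℝ} {γ : ℝ → ℂ}

theorem continuous (hγ : IsSimpleLoop L γ) : Continuous γ := hγ.contDiff.continuous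

theorem differentiable (hγ : IsSimpleLoop L γ) : Differentiable ℝ γ :=
  hγ.contDiff.differentiable (by simp)

theorem eq_iff_coe_eq_coe (hγ : IsSimpleLoop L γ) {s t : ℝ} :
    γ s = γ t ↔ (s : AddCircle L) = t := by
  have : Fact (0 < L) := ⟨hγ.period_pos⟩
  refine ⟨fun h => ?_, fun h => by rw [← hγ.periodic.lift_coe, h, hγ.periodic.lift_coe]⟩
  obtain ⟨s', hs', hs⟩ := AddCircle.eq_coe_Ico (s : AddCircle L)
  obtain ⟨t', ht', ht⟩ := AddCircle.eq_coe_Ico (t : AddCircle L)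
  rw [← hγ.periodic.lift_coe s, ← hγ.periodic.lift_coe t, ← hs, ← ht, hγ.periodic.lift_coe,
    hγ.periodic.lift_coe] at h
  rw [← hs, ← ht, hγ.injOn hs' ht' h]

theorem eq_of_abs_sub_lt (hγ : IsSimpleLoop L γ) {s t : ℝ} (h : γ t = γ s)
    (hst : |t - s| < L) : t = s := by
  rw [hγ.eq_iff_coe_eq_coe, ← sub_eq_zero, ← AddCircle.coe_sub, AddCircle.coe_eq_zero_iff] at h
  obtain ⟨n, hn⟩ := h
  rw [← hn, zsmul_eq_mul, abs_mul, abs_of_pos hγ.period_pos,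
    mul_lt_iff_lt_one_left hγ.period_pos, ← Int.cast_abs, ← Int.cast_one, Int.cast_lt,
    Int.abs_lt_one_iff] at hst
  rw [hst, zero_smul] at hn
  exact sub_eq_zero.1 hn.symm

theorem dslope_ne_zero (hγ : IsSimpleLoop L γ) {s t : ℝ} (hst : |t - s| < L) :
    dslope γ s t ≠ 0 := by
  rcases eq_or_ne t s with rfl | hts
  · exact dslope_same γ t ▸ hγ.deriv_ne_zero t
  · rw [dslope_of_ne γ hts, slope_def_module]
    exact smul_ne_zero (inv_ne_zero (sub_ne_zero.2 hts))
      (sub_ne_zero.2 fun h => hts (hγ.eq_of_abs_sub_lt h hst))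

end IsSimpleLoop

/-- The closed curve parametrized by `γ` over a period `L` has winding number one around some point
off the curve: if the curve is simple, it is traversed counterclockwise. -/
def IsCounterclockwise (L : ℝ) (γ : ℝ → ℂ) : Prop :=
  ∃ z₀ : ℂ, (∀ s, γ s ≠ z₀) ∧ ∫ t in 0..L, deriv γ t / (γ t - z₀) = 2 * π * Complex.I

end SimpleLoops

section ChordQuotients

/-- The quotient of the chords of `γ` and of `e` from parameter `s` to parameter `t`, extended by
the quotient of the tangent vectors where the chord of `e` degenerates. Its logarithmic derivative
in `t` is the difference of the Cauchy kernels of `γ` and `e`. -/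
noncomputable def chordQuotient (γ e : ℝ → ℂ) (s t : ℝ) : ℂ :=
  open scoped Classical in
  if e t = e s then deriv γ s / deriv e s else (γ t - γ s) / (e t - e s)

variable {L : ℝ} {γ e : ℝ → ℂ}

theorem periodic_chordQuotient_right (hγ : Periodic γ L) (he : Periodic e L) (s : ℝ) :
    Periodic (chordQuotient γ e s) L := fun t => by
  simp only [chordQuotient, hγ t, he t]

theorem periodic_chordQuotient (hγ : Periodic γ L) (he : Periodic e L) :
    Periodic (chordQuotient γ e) L := fun s => by
  funext t
  simp only [chordQuotient, hγ s, he s, periodic_deriv hγ s, periodic_deriv he s]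

theorem chordQuotient_eq_dslope_div_dslope (he : IsSimpleLoop L e) {s t : ℝ} (hst : |t - s| < L) :
    chordQuotient γ e s t = dslope γ s t / dslope e s t := by
  rcases eq_or_ne t s with rfl | hts
  · rw [dslope_same, dslope_same, chordQuotient, if_pos rfl]
  · rw [chordQuotient, if_neg fun h => hts (he.eq_of_abs_sub_lt h hst), dslope_of_ne γ hts,
      dslope_of_ne e hts, slope_def_module, slope_def_module, Complex.real_smul, Complex.real_smul,
      mul_div_mul_left]
    exact_mod_cast inv_ne_zero (sub_ne_zero.2 hts)

theorem contDiff_chordQuotient (hγ : ContDiff ℝ ∞ γ) (hγL : Periodic γ L)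
    (he : IsSimpleLoop L e) : ContDiff ℝ ∞ (uncurry (chordQuotient γ e)) := by
  rw [contDiff_iff_contDiffAt]
  rintro ⟨s₀, t₀⟩
  set k := toIcoDiv he.period_pos s₀ t₀
  have hk : |t₀ - k • L - s₀| < L := by
    have := sub_toIcoDiv_zsmul_mem_Ico he.period_pos s₀ t₀
    rw [abs_lt]
    constructor <;> linarith [this.1, this.2, he.period_pos]
  have hlocal : uncurry (chordQuotient γ e) =ᶠ[𝓝 (s₀, t₀)]
      fun p => dslope γ p.1 (p.2 - k • L) / dslope e p.1 (p.2 - k • L) := by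
    have hnear : ∀ᶠ p : ℝ × ℝ in 𝓝 (s₀, t₀), |p.2 - k • L - p.1| < L :=
      ContinuousAt.eventually_lt (by fun_prop) continuousAt_const hk
    filter_upwards [hnear] with p hp
    rw [← chordQuotient_eq_dslope_div_dslope he hp, uncurry,
      (periodic_chordQuotient_right hγL he.periodic p.1).sub_zsmul_eq k]
  have hsmooth {f : ℝ → ℂ} (hf : ContDiff ℝ ∞ f) :
      ContDiff ℝ ∞ fun p : ℝ × ℝ => dslope f p.1 (p.2 - k • L) :=
    (contDiff_dslope (n := ⊤) hf).comp (contDiff_fst.prodMk (contDiff_snd.sub contDiff_const))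
  simp only [div_eq_mul_inv] at hlocal
  exact ((hsmooth hγ).contDiffAt.mul ((hsmooth he.contDiff).contDiffAt.inv
    (he.dslope_ne_zero hk))).congr_of_eventuallyEq hlocal

theorem chordQuotient_ne_zero (hγ : IsSimpleLoop L γ) (he : IsSimpleLoop L e) (s t : ℝ) :
    chordQuotient γ e s t ≠ 0 := by
  rw [chordQuotient]
  split_ifs with hst
  · exact div_ne_zero (hγ.deriv_ne_zero s) (he.deriv_ne_zero s)
  · refine div_ne_zero (sub_ne_zero.2 ?_) (sub_ne_zero.2 hst)
    rwa [Ne, hγ.eq_iff_coe_eq_coe, ← he.eq_iff_coe_eq_coe]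

theorem logDeriv_chordQuotient (hγ : IsSimpleLoop L γ) (he : IsSimpleLoop L e) {s t : ℝ}
    (hst : e t ≠ e s) : logDeriv (chordQuotient γ e s) t =
      deriv γ t / (γ t - γ s) - deriv e t / (e t - e s) := by
  have hlocal : chordQuotient γ e s =ᶠ[𝓝 t] fun u => (γ u - γ s) / (e u - e s) := by
    filter_upwards [he.continuous.continuousAt.eventually_ne hst] with u hu
    rw [chordQuotient, if_neg hu]
  have hst' : γ t ≠ γ s := by rwa [Ne, hγ.eq_iff_coe_eq_coe, ← he.eq_iff_coe_eq_coe]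
  rw [logDeriv_apply, hlocal.deriv_eq, hlocal.eq_of_nhds, ← logDeriv_apply,
    logDeriv_div (f := fun u => γ u - γ s) (g := fun u => e u - e s) t (sub_ne_zero.2 hst')
      (sub_ne_zero.2 hst) (hγ.differentiable t |>.sub_const _) (he.differentiable t |>.sub_const _),
    logDeriv_apply, logDeriv_apply, deriv_sub_const, deriv_sub_const]

theorem contDiff_logDeriv_chordQuotient (hγ : IsSimpleLoop L γ) (he : IsSimpleLoop L e) :
    ContDiff ℝ ∞ (uncurry fun s => logDeriv (chordQuotient γ e s)) := by
  have hQ := contDiff_chordQuotient hγ.contDiff hγ.periodic he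
  change ContDiff ℝ ∞ fun p : ℝ × ℝ => deriv (chordQuotient γ e p.1) p.2 / chordQuotient γ e p.1 p.2
  simp only [div_eq_mul_inv]
  exact (contDiff_uncurry_deriv hQ).mul (hQ.inv fun p => chordQuotient_ne_zero hγ he p.1 p.2)

theorem continuous_logDeriv_chordQuotient_right (hγ : IsSimpleLoop L γ) (he : IsSimpleLoop L e)
    (s : ℝ) : Continuous (logDeriv (chordQuotient γ e s)) :=
  (contDiff_logDeriv_chordQuotient hγ he).continuous.comp (by fun_prop : Continuous fun t => (s, t))

theorem periodic_logDeriv_chordQuotient (hγ : Periodic γ L) (he : Periodic e L) :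
    Periodic (fun s => logDeriv (chordQuotient γ e s)) L :=
  (periodic_chordQuotient hγ he).comp logDeriv

theorem periodic_logDeriv_chordQuotient_right (hγ : Periodic γ L) (he : Periodic e L) (s : ℝ) :
    Periodic (logDeriv (chordQuotient γ e s)) L :=
  have hQ := periodic_chordQuotient_right hγ he s
  (periodic_deriv hQ).div hQ

end ChordQuotients

section Circle

/-- The parametrization `t ↦ exp (2 * π * I * t / L)` of the unit circle, the model curve to which
other curves of period `L` are compared. -/
noncomputable def circleLoop (L t : ℝ) : ℂ := AddCircle.toCircle (t : AddCircle L)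

variable {L : ℝ}

theorem circleLoop_add (s t : ℝ) : circleLoop L (s + t) = circleLoop L s * circleLoop L t := by
  simp [circleLoop, AddCircle.toCircle_add]

theorem circleLoop_neg (t : ℝ) : circleLoop L (-t) = (circleLoop L t)⁻¹ := by
  simp [circleLoop, AddCircle.toCircle_neg]

theorem circleLoop_nat_mul (n : ℕ) (t : ℝ) : circleLoop L (n * t) = circleLoop L t ^ n := by
  rw [← nsmul_eq_mul]; simp [circleLoop, AddCircle.toCircle_nsmul]

theorem norm_circleLoop (t : ℝ) : ‖circleLoop L t‖ = 1 := Circle.norm_coe _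

theorem circleLoop_ne_zero (t : ℝ) : circleLoop L t ≠ 0 := Circle.coe_ne_zero _

theorem hasDerivAt_circleLoop (t : ℝ) :
    HasDerivAt (circleLoop L) (2 * π * Complex.I / L * circleLoop L t) t := by
  have := hasDerivAt_fourier L 1 t
  simp only [fourier_one, Int.cast_one, mul_one] at this
  exact this

theorem circleLoop_eq_exp (t : ℝ) :
    circleLoop L t = Complex.exp (2 * π * Complex.I * (t / L : ℝ)) := by
  rw [circleLoop, AddCircle.toCircle_apply_mk, Circle.coe_exp]
  push_cast
  ring_nf

theorem contDiff_circleLoop : ContDiff ℝ ∞ (circleLoop L) := by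
  rw [funext circleLoop_eq_exp]
  exact (contDiff_const.mul (Complex.ofRealCLM.contDiff.comp (contDiff_id.div_const L))).cexp

theorem isSimpleLoop_circleLoop (hL : 0 < L) : IsSimpleLoop L (circleLoop L) where
  period_pos := hL
  contDiff := contDiff_circleLoop
  periodic t := by simp [circleLoop]
  deriv_ne_zero t := by
    rw [(hasDerivAt_circleLoop t).deriv]
    simp [circleLoop_ne_zero, hL.ne', pi_ne_zero]
  injOn s hs t ht hst := by
    have : Fact (0 < L) := ⟨hL⟩
    have := AddCircle.injective_toCircle hL.ne' (Circle.ext hst)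
    rwa [AddCircle.coe_eq_coe_iff_of_mem_Ico (a := 0) (by simpa using hs)
      (by simpa using ht)] at this

theorem norm_circleLoop_sub_le (hL : 0 < L) (s t : ℝ) :
    ‖circleLoop L s - circleLoop L t‖ ≤ 2 * π / L * |s - t| := by
  refine convex_univ.norm_image_sub_le_of_norm_deriv_le
    (fun x _ => (hasDerivAt_circleLoop x).differentiableAt) (fun x _ => ?_)
    (mem_univ _) (mem_univ _)
  rw [(hasDerivAt_circleLoop x).deriv, norm_mul, norm_circleLoop, mul_one]
  simp [abs_of_pos hL, abs_of_pos pi_pos]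

theorem deriv_circleLoop_div_sub (s t : ℝ) :
    deriv (circleLoop L) t / (circleLoop L t - circleLoop L s) =
      2 * π * Complex.I / L * (1 - circleLoop L (s - t))⁻¹ := by
  have : circleLoop L t - circleLoop L s = circleLoop L t * (1 - circleLoop L (s - t)) := by
    rw [mul_one_sub, ← circleLoop_add, add_sub_cancel]
  rw [(hasDerivAt_circleLoop t).deriv, this, mul_div_assoc,
    div_mul_cancel_left₀ (circleLoop_ne_zero t)]

theorem circleLoop_sub_eq_one_iff {s t : ℝ} :
    circleLoop L (s - t) = 1 ↔ circleLoop L t = circleLoop L s := by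
  rw [sub_eq_add_neg, circleLoop_add, circleLoop_neg,
    mul_inv_eq_one₀ (circleLoop_ne_zero t), eq_comm]

theorem im_deriv_circleLoop_div_sub {s t : ℝ} (hst : circleLoop L t ≠ circleLoop L s) :
    (deriv (circleLoop L) t / (circleLoop L t - circleLoop L s)).im = π / L := by
  have hscale : (2 * π * Complex.I / L : ℂ) = (2 * π / L : ℝ) * Complex.I := by push_cast; ring
  rw [deriv_circleLoop_div_sub, hscale, mul_assoc, Complex.im_ofReal_mul, Complex.I_mul_im,
    re_inv_one_sub (norm_circleLoop _) (circleLoop_sub_eq_one_iff.not.2 hst)]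
  ring

theorem isPrimitiveRoot_circleLoop {N : ℕ} (hL : L ≠ 0) (hN : N ≠ 0) :
    IsPrimitiveRoot (circleLoop L (L / N)) N := by
  convert Complex.isPrimitiveRoot_exp N hN using 1
  rw [circleLoop_eq_exp, div_div_cancel_left' hL]
  push_cast
  ring_nf

end Circle

section Index

variable {L : ℝ} {γ e : ℝ → ℂ}

theorem exists_int_integral_logDeriv_chordQuotient_eq (hγ : IsSimpleLoop L γ)
    (he : IsSimpleLoop L e) : ∃ n : ℤ, ∀ s,
      ∫ t in 0..L, logDeriv (chordQuotient γ e s) t = n * (2 * π * Complex.I) := by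
  have hQ (s : ℝ) : ContDiff ℝ 1 (chordQuotient γ e s) :=
    ((contDiff_chordQuotient hγ.contDiff hγ.periodic he).comp
      (contDiff_const.prodMk contDiff_id)).of_le (by simp)
  choose n hn using fun s => exists_int_integral_logDeriv_eq (hQ s) (chordQuotient_ne_zero hγ he s)
    (periodic_chordQuotient_right hγ.periodic he.periodic s).eq.symm
  have hn_eq (s : ℝ) : (n s : ℝ) =
      (∫ t in 0..L, logDeriv (chordQuotient γ e s) t).im / (2 * π) := by
    rw [hn s, eq_div_iff two_pi_pos.ne']
    simp
  have hn_cont : Continuous n := by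
    rw [Int.isClosedEmbedding_coe_real.isEmbedding.continuous_iff]
    refine Continuous.congr ?_ fun s => (hn_eq s).symm
    exact (Complex.continuous_im.comp
      (intervalIntegral.continuous_parametric_intervalIntegral_of_continuous'
        (contDiff_logDeriv_chordQuotient hγ he).continuous 0 L)).div_const _
  exact ⟨n 0, fun s => by rw [hn s, PreconnectedSpace.constant inferInstance hn_cont (y := 0)]⟩

theorem hasDerivAt_arg_div_chord (hγ : IsSimpleLoop L γ) {F : ℝ → ℂ} {s t : ℝ}
    (hF : DifferentiableAt ℝ F t) (hF₀ : F t ≠ 0) (hre : 0 ≤ (F t / (γ t - γ s)).re)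
    (hst : circleLoop L t ≠ circleLoop L s) :
    HasDerivAt (fun u => (F u / (γ u - γ s)).arg)
      ((logDeriv F t - logDeriv (chordQuotient γ (circleLoop L) s) t).im - π / L) t := by
  have he := isSimpleLoop_circleLoop hγ.period_pos
  have hchord : γ t - γ s ≠ 0 := by
    rwa [sub_ne_zero, Ne, hγ.eq_iff_coe_eq_coe, ← he.eq_iff_coe_eq_coe]
  have hchord_diff : DifferentiableAt ℝ (fun u => γ u - γ s) t := (hγ.differentiable t).sub_const _
  have hslit : F t / (γ t - γ s) ∈ Complex.slitPlane := by
    rw [Complex.mem_slitPlane_iff, or_iff_not_imp_right, not_not]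
    exact fun him => hre.lt_of_ne fun h => div_ne_zero hF₀ hchord (Complex.ext h.symm him)
  have hlog : logDeriv (fun u => F u / (γ u - γ s)) t =
      logDeriv F t - deriv γ t / (γ t - γ s) := by
    rw [logDeriv_div t hF₀ hchord hF hchord_diff, logDeriv_apply (fun u => γ u - γ s),
      deriv_sub_const]
  rw [← im_deriv_circleLoop_div_sub hst, ← Complex.sub_im, logDeriv_chordQuotient hγ he hst,
    sub_sub, sub_add_cancel, ← hlog]
  exact hasDerivAt_arg (hF.fun_div hchord_diff hchord) hslit

/- On the open period after `s`, the argument of `F / (γ - γ s)` stays in `[-π / 2, π / 2]`, and its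
derivative extends continuously to the closed period. -/
theorem abs_im_integral_logDeriv_sub_le (hγ : IsSimpleLoop L γ) {F : ℝ → ℂ}
    (hF : ContDiff ℝ 1 F) (hFL : Periodic F L) (hF₀ : ∀ t, F t ≠ 0) {s : ℝ}
    (hre : ∀ t, 0 ≤ (F t / (γ t - γ s)).re) :
    |(∫ t in 0..L, logDeriv F t).im -
      (∫ t in 0..L, logDeriv (chordQuotient γ (circleLoop L) s) t).im - π| ≤ π := by
  have hL := hγ.period_pos
  have he := isSimpleLoop_circleLoop hL
  have hf := continuous_logDeriv hF hF₀
  have hq := continuous_logDeriv_chordQuotient_right hγ he s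
  set K := fun t => logDeriv F t - logDeriv (chordQuotient γ (circleLoop L) s) t
  have hK : Continuous fun t => (K t).im := Complex.continuous_im.comp (hf.sub hq)
  have hKL : Periodic (fun t => (K t).im) L := (((periodic_deriv hFL).div hFL).sub
    (periodic_logDeriv_chordQuotient_right hγ.periodic he.periodic s)).comp Complex.im
  have hintegral : ∫ t in s..s + L, ((K t).im - π / L) = (∫ t in 0..L, logDeriv F t).im -
      (∫ t in 0..L, logDeriv (chordQuotient γ (circleLoop L) s) t).im - π := by
    rw [intervalIntegral.integral_sub (hK.intervalIntegrable _ _) intervalIntegrable_const,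
      intervalIntegral.integral_const, add_sub_cancel_left, smul_eq_mul, mul_div_cancel₀ _ hL.ne',
      ← Complex.sub_im, ← intervalIntegral.integral_sub (hf.intervalIntegrable _ _)
        (hq.intervalIntegrable _ _), hKL.intervalIntegral_add_eq s 0, zero_add]
    exact congrArg (· - π) (Complex.imCLM.intervalIntegral_comp_comm
      ((hf.sub hq).intervalIntegrable 0 L))
  rw [← hintegral, ← Real.norm_eq_abs]
  refine (norm_integral_le_of_hasDerivAt_Ioo (by linarith) (hK.sub continuous_const)
    (fun t ht => hasDerivAt_arg_div_chord hγ (hF.differentiable one_ne_zero t) (hF₀ t) (hre t)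
      fun h => ht.1.ne' (he.eq_of_abs_sub_lt h ?_))
    fun t _ => Complex.abs_arg_le_pi_div_two_iff.2 (hre t)).trans_eq (by ring)
  rw [abs_of_pos (sub_pos.2 ht.1)]
  linarith [ht.2]

theorem re_div_sub_nonneg_of_norm_sub_le {z w ζ : ℂ} (h : ‖w - z‖ ≤ ‖ζ - z‖) :
    0 ≤ ((ζ - z) / (ζ - w)).re := by
  have hsq : Complex.normSq (w - z) ≤ Complex.normSq (ζ - z) := by
    rw [Complex.normSq_eq_norm_sq, Complex.normSq_eq_norm_sq]
    gcongr
  rw [Complex.div_re, ← add_div]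
  refine div_nonneg ?_ (Complex.normSq_nonneg _)
  simp only [Complex.normSq_apply, Complex.sub_re, Complex.sub_im] at hsq ⊢
  nlinarith [sq_nonneg (ζ.re - w.re), sq_nonneg (ζ.im - w.im)]

theorem exists_im_integral_logDeriv_chordQuotient_nonpos (hγ : IsSimpleLoop L γ) :
    ∃ s, (∫ t in 0..L, logDeriv (chordQuotient γ (circleLoop L) s) t).im ≤ 0 := by
  obtain ⟨s, hs⟩ := exists_forall_le_of_continuous_periodic (f := fun t => -(γ t).re) hγ.period_pos
    (Complex.continuous_re.comp hγ.continuous).neg fun t => by simp only [hγ.periodic t]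
  have hre (t : ℝ) : 0 ≤ (-1 / (γ t - γ s)).re := by
    rw [neg_div, one_div, Complex.neg_re, Complex.inv_re, ← neg_div, Complex.sub_re, neg_sub]
    exact div_nonneg (by linarith [hs t]) (Complex.normSq_nonneg _)
  have hbound := abs_im_integral_logDeriv_sub_le hγ (F := fun _ => -1) contDiff_const
    (fun _ => rfl) (by simp) hre
  simp only [logDeriv_apply, deriv_const, zero_div, intervalIntegral.integral_zero,
    Complex.zero_im] at hbound
  exact ⟨s, by simp only [logDeriv_apply]; linarith [(abs_le.1 hbound).1]⟩

theorem exists_im_integral_logDeriv_chordQuotient_nonneg (hγ : IsSimpleLoop L γ)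
    (horient : IsCounterclockwise L γ) :
    ∃ s, 0 ≤ (∫ t in 0..L, logDeriv (chordQuotient γ (circleLoop L) s) t).im := by
  obtain ⟨z₀, hz₀, hI⟩ := horient
  have hF : ContDiff ℝ 1 fun t => γ t - z₀ := (hγ.contDiff.of_le (by simp)).sub contDiff_const
  have hFL : Periodic (fun t => γ t - z₀) L := fun t => by simp only [hγ.periodic t]
  obtain ⟨s, hs⟩ := exists_forall_le_of_continuous_periodic hγ.period_pos hF.continuous.norm
    (hFL.comp norm)
  have hbound := abs_im_integral_logDeriv_sub_le hγ hF hFL (fun t => sub_ne_zero.2 (hz₀ t))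
    fun t => re_div_sub_nonneg_of_norm_sub_le (hs t)
  have hI_im : (∫ t in 0..L, logDeriv (fun u => γ u - z₀) t).im = 2 * π := by
    simp [logDeriv_apply, hI]
  rw [hI_im] at hbound
  exact ⟨s, by linarith [(abs_le.1 hbound).2]⟩

theorem integral_logDeriv_chordQuotient_circleLoop_eq_zero (hγ : IsSimpleLoop L γ)
    (horient : IsCounterclockwise L γ) (s : ℝ) :
    ∫ t in 0..L, logDeriv (chordQuotient γ (circleLoop L) s) t = 0 := by
  obtain ⟨n, hn⟩ := exists_int_integral_logDeriv_chordQuotient_eq hγ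
    (isSimpleLoop_circleLoop hγ.period_pos)
  have hn_im (s : ℝ) : (∫ t in 0..L, logDeriv (chordQuotient γ (circleLoop L) s) t).im =
      n * (2 * π) := by rw [hn s]; simp
  obtain ⟨s₁, hs₁⟩ := exists_im_integral_logDeriv_chordQuotient_nonpos hγ
  obtain ⟨s₂, hs₂⟩ := exists_im_integral_logDeriv_chordQuotient_nonneg hγ horient
  rw [hn_im] at hs₁ hs₂
  have hn_zero : (n : ℝ) = 0 := le_antisymm (nonpos_of_mul_nonpos_left hs₁ two_pi_pos)
    (nonneg_of_mul_nonneg_left hs₂ two_pi_pos)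
  simp [hn s, Int.cast_eq_zero.1 hn_zero]

end Index

section CauchySums

variable {L : ℝ} {γ : ℝ → ℂ}

theorem norm_circleLoop_cauchySum_sub_le (hL : 0 < L) {N : ℕ} {s a η : ℝ} {t : Fin N → ℝ}
    (ha : circleLoop L a ^ N = -1) (ht : ∀ j, |t j - (s + a + j * (L / N))| ≤ η)
    (hη : 2 * π / L * η ≤ 1 / N) :
    (∀ j, circleLoop L (t j) ≠ circleLoop L s) ∧
      ‖((L / N : ℝ) : ℂ) * ∑ j, deriv (circleLoop L) (t j) / (circleLoop L (t j) - circleLoop L s)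
        - π * Complex.I‖ ≤ 2 * π ^ 2 / L * (N * η) := by
  have hN : N ≠ 0 := by
    rintro rfl
    norm_num at ha
  have hu (j : Fin N) :
      ‖circleLoop L (s - t j) - (circleLoop L a)⁻¹ * (circleLoop L (L / N))⁻¹ ^ (j : ℕ)‖ ≤
        2 * π / L * η := by
    rw [inv_pow, ← circleLoop_nat_mul, ← circleLoop_neg, ← circleLoop_neg, ← circleLoop_add]
    refine (norm_circleLoop_sub_le hL _ _).trans ?_
    gcongr
    refine (le_of_eq ?_).trans (ht j)
    rw [abs_sub_comm]
    ring_nf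
  obtain ⟨hne, hsum⟩ := norm_sum_inv_one_sub_sub_le
    (isPrimitiveRoot_circleLoop hL.ne' hN).inv (by rw [inv_pow, ha]; norm_num) hu hη
  refine ⟨fun j => circleLoop_sub_eq_one_iff.not.1 (hne j), ?_⟩
  have hscale : ((L / N : ℝ) : ℂ) *
      ∑ j, deriv (circleLoop L) (t j) / (circleLoop L (t j) - circleLoop L s) - π * Complex.I =
        2 * π * Complex.I / N * (∑ j, (1 - circleLoop L (s - t j))⁻¹ - N / 2) := by
    simp only [deriv_circleLoop_div_sub, ← Finset.mul_sum]
    have : (L : ℂ) ≠ 0 := by exact_mod_cast hL.ne'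
    push_cast
    field_simp
  calc _ = 2 * π / N * ‖∑ j, (1 - circleLoop L (s - t j))⁻¹ - N / 2‖ := by
        rw [hscale, norm_mul]
        simp [abs_of_pos pi_pos]
    _ ≤ 2 * π / N * (2 * π / L * η * N ^ 2 / 2) := by gcongr
    _ = 2 * π ^ 2 / L * (N * η) := by field_simp

theorem circleLoop_half_sub_mul_pow_eq_neg_one (hL : L ≠ 0) {N : ℕ} (hN : N ≠ 0) (k : ℕ) :
    circleLoop L ((1 / 2 - k) * (L / N)) ^ N = -1 := by
  have hcancel : (N : ℝ) * ((1 / 2 - k) * (L / N)) / L = 1 / 2 - k := by field_simp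
  have hangle : 2 * π * Complex.I * ((1 / 2 - k : ℝ) : ℂ) =
      π * Complex.I - k * (2 * π * Complex.I) := by
    push_cast
    ring
  rw [← circleLoop_nat_mul, circleLoop_eq_exp, hcancel, hangle, Complex.exp_periodic.sub_nat_mul_eq,
    Complex.exp_pi_mul_I]

theorem exists_norm_cauchySum_sub_le (hγ : IsSimpleLoop L γ)
    (horient : IsCounterclockwise L γ) (m : ℕ) :
    ∃ C, ∀ (N : ℕ) (s a η : ℝ) (t : Fin N → ℝ), circleLoop L a ^ N = -1 →
      (∀ j, |t j - (s + a + j * (L / N))| ≤ η) → 2 * π / L * η ≤ 1 / N →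
        ‖((L / N : ℝ) : ℂ) * ∑ j, deriv γ (t j) / (γ (t j) - γ s) - π * Complex.I‖ ≤
          C * (1 / N ^ m + N * η) := by
  have hL := hγ.period_pos
  have he := isSimpleLoop_circleLoop hL
  obtain ⟨C, hC⟩ := exists_norm_perturbedRiemannSum_sub_integral_le hL
    (contDiff_logDeriv_chordQuotient hγ he)
    (periodic_logDeriv_chordQuotient hγ.periodic he.periodic)
    (periodic_logDeriv_chordQuotient_right hγ.periodic he.periodic) m
  refine ⟨|C| + 2 * π ^ 2 / L, fun N s a η t ha ht hη => ?_⟩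
  have hN : 0 < N := Nat.pos_of_ne_zero <| by
    rintro rfl
    norm_num at ha
  have hη_nonneg : 0 ≤ η := (abs_nonneg _).trans (ht ⟨0, hN⟩)
  obtain ⟨hne, hcircle⟩ := norm_circleLoop_cauchySum_sub_le hL ha ht hη
  have hquot := hC N hN s (s + a) η t ht
  rw [integral_logDeriv_chordQuotient_circleLoop_eq_zero hγ horient s, sub_zero,
    Complex.real_smul] at hquot
  have hsplit : ∑ j, deriv γ (t j) / (γ (t j) - γ s) =
      ∑ j, logDeriv (chordQuotient γ (circleLoop L) s) (t j) +
        ∑ j, deriv (circleLoop L) (t j) / (circleLoop L (t j) - circleLoop L s) := by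
    rw [← Finset.sum_add_distrib]
    exact Finset.sum_congr rfl fun j _ => by
      rw [logDeriv_chordQuotient hγ he (hne j), sub_add_cancel]
  rw [hsplit, mul_add, add_sub_assoc]
  refine (norm_add_le _ _).trans ((add_le_add hquot hcircle).trans ?_)
  have hη_le : η ≤ N * η := le_mul_of_one_le_left hη_nonneg (by exact_mod_cast hN)
  rw [add_mul]
  gcongr
  · exact le_abs_self C
  · exact le_add_of_nonneg_left (by positivity)

end CauchySums

theorem discretized_cauchy_integral_general {L : ℝ} {γ : ℝ → ℂ} (hγ : IsSimpleLoop L γ)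
    (horient : IsCounterclockwise L γ) {κ : ℕ} (hκ : 1 ≤ κ) (M : ℝ) :
    ∃ C > 0, ∃ N₀ : ℕ, ∀ N : ℕ, N₀ ≤ N → ∀ s t : Fin N → ℝ,
      (∀ i, |s i - i * L / N| ≤ M / N ^ (κ + 1)) →
      (∀ i, |t i - (i + 1 / 2) * L / N| ≤ M / N ^ (κ + 1)) → ∀ k,
        ‖((L / N : ℝ) : ℂ) * ∑ j, deriv γ (t j) / (γ (t j) - γ (s k)) - π * Complex.I‖ ≤
          C / N ^ κ := by
  obtain ⟨C, hC⟩ := exists_norm_cauchySum_sub_le hγ horient κ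
  obtain ⟨N₀, hN₀⟩ := exists_nat_ge (4 * π * M / L)
  refine ⟨max 1 (C * (1 + 2 * M)), by positivity, N₀, fun N hN s t hs ht k => ?_⟩
  have hL := hγ.period_pos
  have hN_pos : 0 < (N : ℝ) := by exact_mod_cast k.pos
  have hmesh (j : Fin N) : |t j - (s k + (1 / 2 - k) * (L / N) + j * (L / N))| ≤
      2 * M / N ^ (κ + 1) := by
    calc _ = |(t j - (j + 1 / 2) * L / N) - (s k - k * L / N)| := by ring_nf
      _ ≤ M / N ^ (κ + 1) + M / N ^ (κ + 1) := (abs_sub _ _).trans (add_le_add (ht j) (hs k))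
      _ = 2 * M / N ^ (κ + 1) := by ring
  have hsmall : 2 * π / L * (2 * M / N ^ (κ + 1)) ≤ 1 / N :=
    calc _ = 4 * π * M / L / N ^ κ / N := by
          rw [pow_succ]
          field_simp
          ring
      _ ≤ 1 / N := by
        gcongr
        rw [div_le_one (by positivity)]
        exact (hN₀.trans (Nat.cast_le.2 hN)).trans
          (le_self_pow₀ (by exact_mod_cast k.pos) (by omega))
  calc _ ≤ C * (1 / N ^ κ + N * (2 * M / N ^ (κ + 1))) :=
        hC N (s k) _ _ t (circleLoop_half_sub_mul_pow_eq_neg_one hL.ne' k.pos.ne' k) hmesh hsmall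
    _ = C * (1 + 2 * M) / N ^ κ := by
        rw [pow_succ]
        field_simp
    _ ≤ max 1 (C * (1 + 2 * M)) / N ^ κ := by gcongr; exact le_max_right _ _

/-- Discretization of the Cauchy integral `∫ γ'(t)/(γ(t) - γ(s)) dt = iπ` over a well
distributed mesh converges at rate `N^{-κ}`, uniformly in the singularity point. -/
theorem discretized_cauchy_integral
    (L : ℝ) (hL : 0 < L) (l : ℝ → ℂ)
    (hsm : ContDiff ℝ (⊤ : ℕ∞) l) (hper : ∀ s, l (s + L) = l s)
    (harc : ∀ s, ‖deriv l s‖ = 1) (hinj : Set.InjOn l (Set.Ico 0 L))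
    (horient : ∃ z₀ : ℂ, (∀ s, l s ≠ z₀) ∧
      (∫ t in (0:ℝ)..L, deriv l t / (l t - z₀)) = 2 * (π : ℂ) * Complex.I)
    (κ : ℕ) (hκ : 2 ≤ κ) (M : ℝ) (hM : 0 < M)
    (ms mst : (N : ℕ) → Fin N → ℝ)
    (hms : ∀ N, 2 ≤ N → ∀ i : Fin N, ms N i ∈ Set.Ico (0:ℝ) L ∧
      |ms N i - ((i : ℕ) : ℝ) * L / (N : ℝ)| ≤ M / (N : ℝ) ^ (κ + 1))
    (hmst : ∀ N, 2 ≤ N → ∀ i : Fin N, mst N i ∈ Set.Ico (0:ℝ) L ∧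
      |mst N i - (((i : ℕ) : ℝ) + 1/2) * L / (N : ℝ)| ≤ M / (N : ℝ) ^ (κ + 1)) :
    ∃ C > 0, ∃ N₀ : ℕ, ∀ N : ℕ, N₀ ≤ N → ∀ k : Fin N,
      ‖(((L / (N : ℝ)) : ℝ) : ℂ) *
          ∑ j : Fin N, deriv l (mst N j) / (l (mst N j) - l (ms N k))
        - (π : ℂ) * Complex.I‖ ≤ C / (N : ℝ) ^ κ := by
  have hl : IsSimpleLoop L l :=
    ⟨hL, hsm, hper, fun t => norm_ne_zero_iff.1 (harc t ▸ one_ne_zero), hinj⟩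
  obtain ⟨C, hC_pos, N₀, hC⟩ := discretized_cauchy_integral_general hl horient (κ := κ) (by omega) M
  exact ⟨C, hC_pos, max 2 N₀, fun N hN => hC N (le_of_max_le_right hN) (ms N) (mst N)
    (fun i => (hms N (le_of_max_le_left hN) i).2) fun i => (hmst N (le_of_max_le_left hN) i).2⟩
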